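/- Let X be an infinite separable locally compact metric space without isolated points, let f : X → X be a continuous topologically mixing map with a fixed point, let δ = inf_{n≥1} sup_{x∈X} ρ(fⁿ(x), x), and let M be an arbitrary infinite set of positive integers. Then there exist countably infinitely many pairwise disjoint Cantor sets S⁽¹⁾, S⁽²⁾, S⁽³⁾, … of totally transitive points of f, with union S = ⋃_{j≥1} S⁽ʲ⁾ dense in X, such that the set Ŝ = ⋃_{i≥0} fⁱ(S) is dense in X, invariant under f (f(Ŝ) ⊆ Ŝ), and is a δ-scrambled set of f with respect to M: for all distinct c, d ∈ Ŝ, liminf_{n→∞, n∈M} ρ(fⁿ(c), fⁿ(d)) = 0 and limsup_{n→∞, n∈M} ρ(fⁿ(c), fⁿ(d)) ≥ δ. -/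

import Mathlib

open Filter ENNReal

/-- `f` is (topologically) mixing. -/
def TopMixing {X : Type*} [TopologicalSpace X] (f : X → X) : Prop :=
  ∀ U V : Set X, IsOpen U → IsOpen V → U.Nonempty → V.Nonempty →
    ∃ N : ℕ, ∀ n : ℕ, N ≤ n → (f^[n] '' U ∩ V).Nonempty

/-- A Cantor set: a nonempty compact, perfect, totally disconnected subset. -/
def IsCantorSet {X : Type*} [TopologicalSpace X] (C : Set X) : Prop :=
  C.Nonempty ∧ IsCompact C ∧ Perfect C ∧ IsTotallyDisconnected C

/-- `x` is a totally transitive point of `g`. -/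
def TotallyTransitivePoint {Y : Type*} [TopologicalSpace Y] (g : Y → Y) (x : Y) : Prop :=
  ∀ k : ℕ, 1 ≤ k → Dense (Set.range fun m : ℕ => g^[k * m] x)

/-!
In a mixing system a generic pair `(x, y)` has an orbit under `f × f` that clusters at every point
of `X × X`, even when only the times in `M` count. Hence `edist (f^[i] (fⁿ x)) (f^[k] (fⁿ y))` comes
close along `M` both to its value `0` at a fixed point and to its supremum, the diameter of `X`, as
iterates of `f` have dense range. In the same way a generic point `x` gives pairs
`(f^[i] x, f^[k] x)` with `i ≠ k`, the supremum now being that of the displacement of `f^[i - k]`.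
Both suprema are at least `δ`.

Cantor sets all of whose pairs are generic come from Baire category in `C(ℕ × (ℕ → Bool), X)`: a
generic continuous map is injective with dense range and sends every pair of distinct points into a
prescribed residual set. The point is that a continuous map on a totally disconnected space is
approximated by locally constant ones, whose finitely many values can be moved independently.
-/

section Polish

open Topology

theorem isOpen_range_of_locallyCompact {X Y : Type*} [TopologicalSpace X] [TopologicalSpace Y]
    [LocallyCompactSpace X] [T2Space Y] {e : X → Y} (he : IsDenseInducing e) :
    IsOpen (Set.range e) := by
  refine isOpen_iff_mem_nhds.2 (Set.forall_mem_range.2 fun x => ?_)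
  obtain ⟨K, hK, hxK⟩ := exists_compact_mem_nhds x
  rw [he.nhds_eq_comap] at hxK
  obtain ⟨W, hW, hWK⟩ := hxK
  obtain ⟨V, hVW, hV, hxV⟩ := mem_nhds_iff.1 hW
  have hVK : V ∩ Set.range e ⊆ e '' K := by
    rintro _ ⟨hy, y, rfl⟩
    exact ⟨y, hWK (hVW hy), rfl⟩
  refine mem_of_superset (hV.mem_nhds hxV) ?_
  calc V ⊆ closure (V ∩ Set.range e) := he.dense.open_subset_closure_inter hV
    _ ⊆ e '' K := closure_minimal hVK (hK.image he.continuous).isClosed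
    _ ⊆ Set.range e := Set.image_subset_range e K

theorem polishSpace_of_locallyCompact {X : Type*} [TopologicalSpace X] [T2Space X]
    [LocallyCompactSpace X] [SecondCountableTopology X] : PolishSpace X := by
  let := TopologicalSpace.metrizableSpaceMetric X
  have hemb : IsDenseEmbedding ((↑) : X → UniformSpace.Completion X) :=
    UniformSpace.Completion.isDenseEmbedding_coe
  have := (isOpen_range_of_locallyCompact hemb.isDenseInducing).polishSpace
  exact hemb.isEmbedding.toHomeomorph.isClosedEmbedding.polishSpace

end Polish

section GenericMap

open Set TopologicalSpace Topology Uniformity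

variable {Z X ι : Type*} [TopologicalSpace Z]

theorem dense_setOf_pairwise_mem [TopologicalSpace X] [Finite ι] {G : Set (X × X)}
    (hGo : IsOpen G) (hGd : Dense G) :
    Dense {q : ι → X | Pairwise fun i j => (q i, q j) ∈ G} := by
  classical
  suffices Dense (⋂ p : {p : ι × ι // p.1 ≠ p.2}, {q : ι → X | (q p.1.1, q p.1.2) ∈ G}) from
    this.mono fun q hq i j hij => mem_iInter.1 hq ⟨(i, j), hij⟩
  refine (finite_range _).dense_sInter ?_ ?_
  · rintro _ ⟨p, rfl⟩
    exact hGo.preimage (by fun_prop)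
  · rintro _ ⟨⟨⟨i, j⟩, hij : i ≠ j⟩, rfl⟩ q
    have hcont : Continuous fun p : X × X => Function.update (Function.update q i p.1) j p.2 := by
      fun_prop
    have hq := map_mem_closure (t := {q : ι → X | (q i, q j) ∈ G}) hcont (hGd (q i, q j))
      fun p hp => by simpa [hij] using hp
    simpa using hq

theorem mem_closure_iff_forall_isCompact [UniformSpace X] {A : Set C(Z, X)} {φ : C(Z, X)} :
    φ ∈ closure A ↔
      ∀ K, IsCompact K → ∀ V ∈ 𝓤 X, ∃ ψ ∈ A, ∀ z ∈ K, (φ z, ψ z) ∈ V := by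
  rw [mem_closure_iff_nhds_basis
    (nhds_basis_uniformity' ContinuousMap.hasBasis_compactConvergenceUniformity)]
  exact ⟨fun h K hK V hV => h (K, V) ⟨hK, hV⟩, fun h p hp => h p.1 hp.1 p.2 hp.2⟩

theorem isOpen_setOf_mapsTo_prodMap [LocallyCompactSpace Z] [TopologicalSpace X] {C D : Set Z}
    (hC : IsCompact C) (hD : IsCompact D) {G : Set (X × X)} (hG : IsOpen G) :
    IsOpen {φ : C(Z, X) | MapsTo (Prod.map φ φ) (C ×ˢ D) G} := by
  have hcont : Continuous fun φ : C(Z, X) => φ.prodMap φ :=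
    ContinuousMap.continuous_of_continuous_uncurry _ <|
      show Continuous fun p : C(Z, X) × Z × Z => (p.1 p.2.1, p.1 p.2.2) by fun_prop
  exact (ContinuousMap.isOpen_setOfPred_mapsTo (hC.prod hD) hG).preimage hcont

/-- The map `φ` repainted by the palette `q`: a point of colour `some i` is sent to `q i`, an
uncoloured point keeps its value under `φ`. -/
def recolor [TopologicalSpace X] (φ : C(Z, X)) (c : LocallyConstant Z (Option ι)) (q : ι → X) :
    C(Z, X) where
  toFun z := (c z).elim (φ z) q
  continuous_toFun := continuous_iff_continuousAt.2 fun z => by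
    have hc : (fun y => (c z).elim (φ y) q) =ᶠ[𝓝 z] fun y => (c y).elim (φ y) q :=
      (c.isLocallyConstant.eventually_eq z).mono
        fun y hy => congrArg (Option.elim · (φ y) q) hy.symm
    refine ContinuousAt.congr ?_ hc
    cases c z with
    | none => exact φ.continuous.continuousAt
    | some i => exact continuousAt_const

theorem continuous_recolor [TopologicalSpace X] (φ : C(Z, X)) (c : LocallyConstant Z (Option ι)) :
    Continuous (recolor φ c) := by
  refine ContinuousMap.continuous_of_continuous_uncurry _
    (continuous_iff_continuousAt.2 fun ⟨q, z⟩ => ?_)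
  have hc : (fun p : (ι → X) × Z => (c z).elim (φ p.2) p.1) =ᶠ[𝓝 (q, z)]
      Function.uncurry fun q y => recolor φ c q y :=
    (continuous_snd.continuousAt.eventually (c.isLocallyConstant.eventually_eq z)).mono
      fun p hp => congrArg (Option.elim · (φ p.2) p.1) hp.symm
  refine ContinuousAt.congr ?_ hc
  cases c z with
  | none => exact (φ.continuous.comp continuous_snd).continuousAt
  | some i => exact ((continuous_apply i).comp continuous_fst).continuousAt

variable [T2Space Z] [TotallyDisconnectedSpace Z]

theorem exists_recolor_approx [UniformSpace X] (φ : C(Z, X)) {K : Set Z}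
    (hKc : IsCompact K) (hKo : IsOpen K) {V : Set (X × X)} (hV : V ∈ 𝓤 X) :
    ∃ (n : ℕ) (c : LocallyConstant Z (Option (Fin n))) (h : Fin n → X),
      (∀ z ∈ K, (c z).isSome) ∧ ∀ z, (φ z, recolor φ c h z) ∈ V := by
  classical
  have : CompactSpace K := isCompact_iff_compactSpace.1 hKc
  obtain ⟨n, g, h, hg, hgh⟩ :=
    ContinuousMap.exists_finite_approximation_of_mem_nhds_diagonal (φ.restrict K)
      (nhdsSet_diagonal_le_uniformity hV)
  let c : LocallyConstant Z (Option (Fin n)) :=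
    .piecewise hKc.isClosed hKo.isClosed_compl (union_compl_self K)
      (.map some ⟨g, (IsLocallyConstant.iff_continuous g).2 hg⟩)
      (.const _ none) fun _ hz => (hz.2 hz.1).elim
  have hcK : ∀ z (hz : z ∈ K), c z = some (g ⟨z, hz⟩) :=
    fun z hz => LocallyConstant.piecewise_apply_left _ _ _ _ _ _ z hz
  have hcK' : ∀ z ∉ K, c z = none :=
    fun z hz => LocallyConstant.piecewise_apply_right _ _ _ _ _ _ z hz
  refine ⟨n, c, h, fun z hz => by simp [hcK z hz], fun z => ?_⟩
  by_cases hz : z ∈ K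
  · simpa [recolor, hcK z hz] using hgh ⟨z, hz⟩
  · simpa [recolor, hcK' z hz] using refl_mem_uniformity hV

theorem dense_setOf_mapsTo_prodMap [UniformSpace X]
    {C D : Set Z} (hCc : IsCompact C) (hCo : IsOpen C) (hDc : IsCompact D) (hDo : IsOpen D)
    (hCD : Disjoint C D) {G : Set (X × X)} (hGo : IsOpen G) (hGd : Dense G) :
    Dense {φ : C(Z, X) | MapsTo (Prod.map φ φ) (C ×ˢ D) G} := by
  classical
  intro φ
  rw [← closure_closure, mem_closure_iff_forall_isCompact]
  intro K _ V hV
  obtain ⟨n, c, h, hc, hφ⟩ := exists_recolor_approx φ (hCc.union hDc) (hCo.union hDo) hV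
  -- Splitting every colour by `side` gives points of `C` and of `D` distinct palette entries.
  let side := LocallyConstant.ofIsClopen ⟨hCc.isClosed, hCo⟩
  let c' : LocallyConstant Z (Option (Fin n × Fin 2)) :=
    ⟨_, c.isLocallyConstant.comp₂ side.isLocallyConstant fun o s => o.map (·, s)⟩
  refine ⟨recolor φ c' (h ∘ Prod.fst), ?_, fun z _ => ?_⟩
  · refine map_mem_closure (continuous_recolor φ c')
      (dense_setOf_pairwise_mem hGo hGd (h ∘ Prod.fst)) ?_
    rintro q hq ⟨x, y⟩ ⟨hx : x ∈ C, hy : y ∈ D⟩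
    obtain ⟨i, hi⟩ := Option.isSome_iff_exists.1 (hc x (.inl hx))
    obtain ⟨j, hj⟩ := Option.isSome_iff_exists.1 (hc y (.inr hy))
    have hyC : y ∉ C := hCD.notMem_of_mem_right hy
    have hxy : (i, side x) ≠ (j, side y) := by simp [side, LocallyConstant.ofIsClopen, hx, hyC]
    simpa [recolor, c', hi, hj] using hq hxy
  · have hval : recolor φ c' (h ∘ Prod.fst) z = recolor φ c h z := Option.elim_map ..
    rw [hval]
    exact hφ z

variable [LocallyCompactSpace Z]

theorem isTopologicalBasis_setOf_isCompact_isOpen :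
    IsTopologicalBasis {s : Set Z | IsCompact s ∧ IsOpen s} := by
  refine isTopologicalBasis_of_isOpen_of_nhds (fun s hs => hs.2) fun z U hz hU => ?_
  obtain ⟨K, hK, hzK, hKU⟩ := exists_compact_subset hU hz
  obtain ⟨s, hs, hzs, hsK⟩ :=
    loc_compact_Haus_tot_disc_of_zero_dim.exists_subset_of_mem_open hzK isOpen_interior
  have hsK := hsK.trans interior_subset
  exact ⟨s, ⟨hK.of_isClosed_subset hs.1 hsK, hs.2⟩, hzs, hsK.trans hKU⟩

theorem exists_countable_isCompact_isOpen_separating [SecondCountableTopology Z] :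
    ∃ B : Set (Set Z), B.Countable ∧ (∀ C ∈ B, IsCompact C ∧ IsOpen C) ∧
      ∀ x y, x ≠ y → ∃ C ∈ B, ∃ D ∈ B, x ∈ C ∧ y ∈ D ∧ Disjoint C D := by
  obtain ⟨B, hBc, hBsub, hB⟩ := isTopologicalBasis_setOf_isCompact_isOpen (Z := Z).exists_countable
  refine ⟨B, hBsub, hBc, fun x y hxy => ?_⟩
  obtain ⟨U, V, hU, hV, hxU, hyV, hUV⟩ := t2_separation hxy
  obtain ⟨C, hC, hxC, hCU⟩ := hB.exists_subset_of_mem_open hxU hU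
  obtain ⟨D, hD, hyD, hDV⟩ := hB.exists_subset_of_mem_open hyV hV
  exact ⟨C, hC, D, hD, hxC, hyD, hUV.mono hCU hDV⟩

theorem eventually_residual_pairwise_mem [SecondCountableTopology Z] [UniformSpace X]
    {R : Set (X × X)} (hR : R ∈ residual (X × X)) :
    ∀ᶠ φ : C(Z, X) in residual C(Z, X), Pairwise fun x y => (φ x, φ y) ∈ R := by
  obtain ⟨S, hSo, hSd, hSc, hSR⟩ := mem_residual_iff.1 hR
  obtain ⟨B, hBc, hB, hsep⟩ := exists_countable_isCompact_isOpen_separating (Z := Z)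
  have hmaps : ∀ᶠ φ : C(Z, X) in residual C(Z, X), ∀ G ∈ S, ∀ C ∈ B, ∀ D ∈ B, Disjoint C D →
      MapsTo (Prod.map φ φ) (C ×ˢ D) G := by
    simp only [eventually_countable_ball hSc, eventually_countable_ball hBc,
      eventually_imp_distrib_left]
    intro G hG C hC D hD hCD
    exact residual_of_dense_open
      (isOpen_setOf_mapsTo_prodMap (hB C hC).1 (hB D hD).1 (hSo G hG))
      (dense_setOf_mapsTo_prodMap (hB C hC).1 (hB C hC).2 (hB D hD).1 (hB D hD).2 hCD (hSo G hG)
        (hSd G hG))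
  filter_upwards [hmaps] with φ hφ x y hxy
  obtain ⟨C, hC, D, hD, hxC, hyD, hCD⟩ := hsep x y hxy
  exact hSR fun G hG => hφ G hG C hC D hD hCD (mk_mem_prod hxC hyD)

theorem eventually_residual_forall_mem [SecondCountableTopology Z] [Nontrivial Z] [UniformSpace X]
    {A : Set X} (hA : A ∈ residual X) :
    ∀ᶠ φ : C(Z, X) in residual C(Z, X), ∀ z, φ z ∈ A := by
  have hfst : Prod.fst ⁻¹' A ∈ residual (X × X) :=
    tendsto_residual_of_isOpenMap continuous_fst isOpenMap_fst hA
  filter_upwards [eventually_residual_pairwise_mem (Z := Z) hfst] with φ hφ z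
  obtain ⟨y, hy⟩ := exists_ne z
  exact hφ hy.symm

theorem dense_setOf_exists_mem [NoncompactSpace Z] [UniformSpace X] {V : Set X} (hV : V.Nonempty) :
    Dense {φ : C(Z, X) | ∃ z, φ z ∈ V} := by
  classical
  intro φ
  rw [mem_closure_iff_forall_isCompact]
  intro K hK W hW
  obtain ⟨v, hv⟩ := hV
  obtain ⟨z, hz⟩ := (ne_univ_iff_exists_notMem K).1 hK.ne_univ
  obtain ⟨C, hC, hzC, hCK⟩ := loc_compact_Haus_tot_disc_of_zero_dim.exists_subset_of_mem_open
    (mem_compl hz) hK.isClosed.isOpen_compl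
  let c := (LocallyConstant.ofIsClopen hC).map ![some (), none]
  refine ⟨recolor φ c fun _ => v, ⟨z, ?_⟩, fun y hy => ?_⟩
  · simpa [recolor, c, LocallyConstant.ofIsClopen, hzC] using hv
  · have hyC : y ∉ C := fun h => hCK h hy
    simpa [recolor, c, LocallyConstant.ofIsClopen, hyC] using refl_mem_uniformity hW

theorem eventually_residual_denseRange [NoncompactSpace Z] [UniformSpace X]
    [SecondCountableTopology X] :
    ∀ᶠ φ : C(Z, X) in residual C(Z, X), DenseRange φ := by
  have hhit : ∀ᶠ φ : C(Z, X) in residual C(Z, X), ∀ V ∈ countableBasis X, ∃ z, φ z ∈ V := by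
    rw [eventually_countable_ball (countable_countableBasis X)]
    intro V hV
    refine residual_of_dense_open ?_ (dense_setOf_exists_mem (nonempty_of_mem_countableBasis hV))
    rw [ofPred_exists]
    exact isOpen_iUnion fun z =>
      (isOpen_of_mem_countableBasis hV).preimage (continuous_eval_const z)
  filter_upwards [hhit] with φ hφ
  rw [DenseRange, (isBasis_countableBasis X).dense_iff]
  intro V hV _
  obtain ⟨z, hz⟩ := hφ V hV
  exact ⟨φ z, hz, mem_range_self z⟩

end GenericMap

section CantorSet

open Set Topology

theorem perfectSpace_pi {ι : Type*} [Infinite ι] {π : ι → Type*} [∀ i, TopologicalSpace (π i)]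
    [∀ i, Nontrivial (π i)] : PerfectSpace (∀ i, π i) := by
  classical
  refine perfectSpace_iff_forall_not_isolated.2 fun x => ?_
  choose y hy using fun i => exists_ne (x i)
  have hlim : Tendsto (fun i => Function.update x i (y i)) cofinite (𝓝[≠] x) := by
    refine tendsto_nhdsWithin_iff.2 ⟨tendsto_pi_nhds.2 fun k => ?_, .of_forall fun i h => ?_⟩
    · refine tendsto_const_nhds.congr' ((eventually_cofinite_ne k).mono fun i hi => ?_)
      exact (Function.update_of_ne hi.symm (y i) x).symm
    · exact hy i (by simpa using congrFun h i)
  exact hlim.neBot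

theorem isCantorSet_range {C X : Type*} [TopologicalSpace C] [CompactSpace C] [PerfectSpace C]
    [TotallyDisconnectedSpace C] [Nonempty C] [TopologicalSpace X] [T2Space X] {g : C → X}
    (hg : Continuous g) (hinj : Function.Injective g) : IsCantorSet (range g) := by
  have hemb := hg.isClosedEmbedding hinj
  refine ⟨range_nonempty g, isCompact_range hg, ⟨hemb.isClosed_range, ?_⟩, ?_⟩
  · rintro _ ⟨a, rfl⟩
    have ha : AccPt a (𝓟 univ) := PerfectSpace.univ_preperfect a (mem_univ a)
    simpa using ha.map hg.continuousAt hinj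
  · rw [← image_univ, hemb.isEmbedding.isTotallyDisconnected_image]
    exact isTotallyDisconnected_of_totallyDisconnectedSpace univ

/-- Mycielski's theorem. The Cantor sets are the images of the slices `{j} × (ℕ → Bool)` under a
generic continuous map. -/
theorem exists_cantorSets_of_mem_residual {X : Type*} [TopologicalSpace X] [PolishSpace X]
    [Nonempty X] {A : Set X} (hA : A ∈ residual X) {R : Set (X × X)} (hR : R ∈ residual (X × X))
    (hirr : ∀ x, (x, x) ∉ R) :
    ∃ S : ℕ → Set X, Pairwise (Function.onFun Disjoint S) ∧ (∀ j, IsCantorSet (S j)) ∧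
      (∀ j, S j ⊆ A) ∧ Dense (⋃ j, S j) ∧ (⋃ j, S j).Pairwise fun x y => (x, y) ∈ R := by
  let := TopologicalSpace.upgradeIsCompletelyMetrizable X
  have : Nonempty C(ℕ × (ℕ → Bool), X) := ‹Nonempty X›.map (ContinuousMap.const _)
  have : PerfectSpace (ℕ → Bool) := perfectSpace_pi
  obtain ⟨φ, ⟨hφR, hφA⟩, hφd⟩ := (dense_of_mem_residual
    (((eventually_residual_pairwise_mem hR).and (eventually_residual_forall_mem hA)).and
      eventually_residual_denseRange : ∀ᶠ φ : C(ℕ × (ℕ → Bool), X) in residual _, _)).nonempty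
  have hinj : Function.Injective φ := fun x y hxy =>
    by_contra fun hne => hirr (φ x) (by simpa [hxy] using hφR hne)
  have hrange : ⋃ j, range (fun a => φ (j, a)) = range φ := by
    ext x
    simp
  refine ⟨fun j => range fun a => φ (j, a), fun i j hij => ?_, fun j => ?_, fun j => ?_, ?_, ?_⟩
  · refine disjoint_left.2 ?_
    rintro _ ⟨a, rfl⟩ ⟨b, hb⟩
    exact hij (congrArg Prod.fst (hinj hb)).symm
  · exact isCantorSet_range (by fun_prop) (hinj.comp (Prod.mk_right_injective j))
  · exact range_subset_iff.2 fun a => hφA (j, a)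
  · rwa [hrange]
  · rw [hrange]
    rintro _ ⟨x, rfl⟩ _ ⟨y, rfl⟩ hxy
    exact hφR fun h => hxy (congrArg φ h)

end CantorSet

section Transitive

open Set TopologicalSpace Topology

theorem eventually_residual_forall_mapClusterPt {ι Y W : Type*} [TopologicalSpace Y]
    [TopologicalSpace W] [SecondCountableTopology W] {F : Filter ι} [F.IsCountablyGenerated]
    {u : ι → Y → W} (hu : ∀ i, Continuous (u i))
    (h : ∀ U V, IsOpen U → IsOpen V → U.Nonempty → V.Nonempty →
      ∃ᶠ i in F, (u i '' U ∩ V).Nonempty) :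
    ∀ᶠ y in residual Y, ∀ w, MapClusterPt w F fun i => u i y := by
  obtain ⟨s, hs⟩ := F.exists_antitone_basis
  have hvisit : ∀ᶠ y in residual Y, ∀ V ∈ countableBasis W, ∀ n, ∃ i ∈ s n, u i y ∈ V := by
    simp only [eventually_countable_ball (countable_countableBasis W), eventually_countable_forall]
    intro V hV n
    have hVo := isOpen_of_mem_countableBasis hV
    refine residual_of_dense_open ?_ (dense_iff_inter_open.2 fun U hU hUne => ?_)
    · simp only [← exists_prop, ofPred_exists]
      exact isOpen_biUnion fun i _ => hVo.preimage (hu i)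
    · obtain ⟨i, hi, _, ⟨y, hy, rfl⟩, hyV⟩ := hs.1.frequently_iff.1
        (h U V hU hVo hUne (nonempty_of_mem_countableBasis hV)) n trivial
      exact ⟨y, hy, i, hi, hyV⟩
  filter_upwards [hvisit] with y hy w
  refine mapClusterPt_iff_frequently.2 fun N hN => ?_
  obtain ⟨V, hV, -, hVN⟩ := (isBasis_countableBasis W).mem_nhds_iff.1 hN
  refine hs.1.frequently_iff.2 fun n _ => ?_
  obtain ⟨i, hi, hiV⟩ := hy V hV n
  exact ⟨i, hi, hVN hiV⟩

/-- The orbit of `y` under `g` clusters at every point along the filter `F` of times. The choice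
`F = atTop ⊓ 𝓟 M` restricts the orbit to the times in `M`. -/
def IsTransitiveAlong {Y : Type*} [TopologicalSpace Y] (g : Y → Y) (F : Filter ℕ) (y : Y) : Prop :=
  ∀ w, MapClusterPt w F fun n => g^[n] y

namespace TopMixing

variable {X Y : Type*} [TopologicalSpace X] [TopologicalSpace Y] {f : X → X} {g : Y → Y}

theorem eventually_nonempty (hf : TopMixing f) {U V : Set X} (hU : IsOpen U) (hV : IsOpen V)
    (hUne : U.Nonempty) (hVne : V.Nonempty) : ∀ᶠ n in atTop, (f^[n] '' U ∩ V).Nonempty :=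
  eventually_atTop.2 (hf U V hU hV hUne hVne)

theorem denseRange_iterate (hf : TopMixing f) (i : ℕ) : DenseRange f^[i] := by
  refine dense_iff_inter_open.2 fun V hV hVne => ?_
  have hmeet := hf.eventually_nonempty isOpen_univ hV (hVne.mono (subset_univ V)) hVne
  obtain ⟨n, ⟨_, ⟨x, -, rfl⟩, hxV⟩, hin⟩ := (hmeet.and (eventually_ge_atTop i)).exists
  rw [← Nat.add_sub_cancel' hin, Function.iterate_add_apply] at hxV
  exact ⟨_, hxV, mem_range_self _⟩

theorem prodMap (hf : TopMixing f) (hg : TopMixing g) : TopMixing (Prod.map f g) := by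
  rintro U V hU hV ⟨⟨a, b⟩, hab⟩ ⟨⟨c, d⟩, hcd⟩
  obtain ⟨U₁, U₂, hU₁, hU₂, ha, hb, hUU⟩ := isOpen_prod_iff.1 hU a b hab
  obtain ⟨V₁, V₂, hV₁, hV₂, hc, hd, hVV⟩ := isOpen_prod_iff.1 hV c d hcd
  refine eventually_atTop.1 ?_
  filter_upwards [hf.eventually_nonempty hU₁ hV₁ ⟨a, ha⟩ ⟨c, hc⟩,
    hg.eventually_nonempty hU₂ hV₂ ⟨b, hb⟩ ⟨d, hd⟩]
  rintro n ⟨_, ⟨x, hx, rfl⟩, hxV⟩ ⟨_, ⟨y, hy, rfl⟩, hyV⟩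
  exact ⟨(f^[n] x, g^[n] y), ⟨(x, y), hUU ⟨hx, hy⟩, by simp⟩, hVV ⟨hxV, hyV⟩⟩

variable [SecondCountableTopology X]

theorem eventually_residual_isTransitiveAlong (hf : TopMixing f) (hfc : Continuous f)
    {F : Filter ℕ} [F.NeBot] [F.IsCountablyGenerated] (hF : F ≤ atTop) :
    ∀ᶠ x in residual X, IsTransitiveAlong f F x :=
  eventually_residual_forall_mapClusterPt (fun n => hfc.iterate n) fun _ _ hU hV hUne hVne =>
    ((hf.eventually_nonempty hU hV hUne hVne).filter_mono hF).frequently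

theorem eventually_residual_totallyTransitivePoint (hf : TopMixing f) (hfc : Continuous f) :
    ∀ᶠ x in residual X, TotallyTransitivePoint f x := by
  simp only [TotallyTransitivePoint, eventually_countable_forall]
  intro k hk
  have hF : map (k * ·) atTop ≤ atTop := tendsto_id.const_mul_atTop' hk
  filter_upwards [hf.eventually_residual_isTransitiveAlong hfc hF] with x hx
  refine dense_iff_inter_open.2 fun V hV ⟨v, hv⟩ => ?_
  obtain ⟨m, hm⟩ := (frequently_map.1 ((hx v).frequently (hV.mem_nhds hv))).exists
  exact ⟨_, hm, mem_range_self m⟩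

end TopMixing

namespace IsTransitiveAlong

variable {X Y α : Type*} [TopologicalSpace X] [TopologicalSpace Y]

theorem fst_ne_snd [T2Space X] [Nontrivial X] {f : X → X} {F : Filter ℕ} {p : X × X}
    (hp : IsTransitiveAlong (Prod.map f f) F p) : p.1 ≠ p.2 := by
  intro h
  obtain ⟨a, b, hab⟩ := exists_pair_ne X
  have hoff : {q : X × X | q.1 ≠ q.2} ∈ 𝓝 (a, b) :=
    (isOpen_ne_fun continuous_fst continuous_snd).mem_nhds hab
  obtain ⟨n, hn⟩ := ((hp (a, b)).frequently hoff).exists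
  simp [h] at hn

variable [CompleteLinearOrder α] [TopologicalSpace α] [OrderTopology α] {g : Y → Y} {F : Filter ℕ}
  {y : Y} {Φ : Y → α}

theorem liminf_le (hy : IsTransitiveAlong g F y) (hΦ : Continuous Φ) (w : Y) :
    liminf (fun n => Φ (g^[n] y)) F ≤ Φ w :=
  ((hy w).continuousAt_comp hΦ.continuousAt).liminf_le

theorem iSup_le_limsup (hy : IsTransitiveAlong g F y) (hΦ : Continuous Φ) :
    ⨆ w, Φ w ≤ limsup (fun n => Φ (g^[n] y)) F :=
  iSup_le fun w => ((hy w).continuousAt_comp hΦ.continuousAt).le_limsup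

end IsTransitiveAlong

end Transitive

section Scrambled

variable {X : Type*} [PseudoEMetricSpace X]

/-- `(c, d)` is an `η`-scrambled pair of `f` along the filter `F` of times. Scrambled with respect
to a set `M` of times is the case `F = atTop ⊓ 𝓟 M`. -/
def IsScrambledPair (f : X → X) (F : Filter ℕ) (η : ℝ≥0∞) (c d : X) : Prop :=
  liminf (fun n => edist (f^[n] c) (f^[n] d)) F = 0 ∧
    η ≤ limsup (fun n => edist (f^[n] c) (f^[n] d)) F

theorem IsScrambledPair.symm {f : X → X} {F : Filter ℕ} {η : ℝ≥0∞}
    {c d : X} (h : IsScrambledPair f F η c d) : IsScrambledPair f F η d c := by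
  simpa only [IsScrambledPair, edist_comm] using h

theorem IsTransitiveAlong.isScrambledPair_of_semiconj {Y : Type*}
    [TopologicalSpace Y] {f : X → X} {g : Y → Y} {F : Filter ℕ} {y : Y}
    (hy : IsTransitiveAlong g F y) {a b : Y → X} (ha : Continuous a) (hb : Continuous b)
    (hag : Function.Semiconj a g f) (hbg : Function.Semiconj b g f) {w : Y} (hw : a w = b w)
    {η : ℝ≥0∞} (hη : η ≤ ⨆ w, edist (a w) (b w)) :
    IsScrambledPair f F η (a y) (b y) := by
  have hΦ : Continuous fun w => edist (a w) (b w) := ha.edist hb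
  have horbit : ∀ n, edist (f^[n] (a y)) (f^[n] (b y)) = edist (a (g^[n] y)) (b (g^[n] y)) :=
    fun n => by rw [hag.iterate_right n y, hbg.iterate_right n y]
  simp only [IsScrambledPair, horbit]
  refine ⟨nonpos_iff_eq_zero.1 ?_, hη.trans (hy.iSup_le_limsup hΦ)⟩
  simpa [hw] using hy.liminf_le hΦ w

variable {f : X → X} {F : Filter ℕ} {z : X} {η : ℝ≥0∞}

theorem IsTransitiveAlong.isScrambledPair_iterate_iterate {x y : X} (hf : Continuous f)
    (hz : f z = z) (hd : ∀ i, DenseRange f^[i]) (hη : η ≤ ⨆ q : X × X, edist q.1 q.2)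
    (hxy : IsTransitiveAlong (Prod.map f f) F (x, y)) (i k : ℕ) :
    IsScrambledPair f F η (f^[i] x) (f^[k] y) := by
  refine hxy.isScrambledPair_of_semiconj (a := fun q => f^[i] q.1) (b := fun q => f^[k] q.2)
    ((hf.iterate i).comp continuous_fst) ((hf.iterate k).comp continuous_snd)
    (fun q => Function.Commute.iterate_self f i q.1)
    (fun q => Function.Commute.iterate_self f k q.2)
    (w := (z, z)) (by simp [Function.iterate_fixed hz]) (hη.trans_eq ?_)
  calc ⨆ q : X × X, edist q.1 q.2
    _ = ⨆ q : Set.range (Prod.map f^[i] f^[k]), edist q.1.1 q.1.2 :=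
        (((hd i).prodMap (hd k)).ciSup' (by fun_prop)).symm
    _ = ⨆ q : X × X, edist (f^[i] q.1) (f^[k] q.2) :=
        iSup_range' (fun q : X × X => edist q.1 q.2) _

theorem IsTransitiveAlong.isScrambledPair_iterate_self {x : X} (hf : Continuous f)
    (hz : f z = z) (hd : ∀ i, DenseRange f^[i])
    (hη : ∀ l, 1 ≤ l → η ≤ ⨆ x, edist (f^[l] x) x)
    (hx : IsTransitiveAlong f F x) {i k : ℕ} (hik : i ≠ k) :
    IsScrambledPair f F η (f^[i] x) (f^[k] x) := by
  wlog hlt : k < i generalizing i k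
  · exact (this hik.symm (by omega)).symm
  refine hx.isScrambledPair_of_semiconj (hf.iterate i) (hf.iterate k)
    (Function.Commute.iterate_self f i) (Function.Commute.iterate_self f k)
    (w := z) (by simp [Function.iterate_fixed hz]) ((hη (i - k) (by omega)).trans_eq ?_)
  calc ⨆ w, edist (f^[i - k] w) w
    _ = ⨆ w : Set.range f^[k], edist (f^[i - k] w) (w : X) :=
        ((hd k).ciSup' ((hf.iterate (i - k)).edist continuous_id)).symm
    _ = ⨆ w, edist (f^[i - k] (f^[k] w)) (f^[k] w) :=
        iSup_range' (fun w : X => edist (f^[i - k] w) w) _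
    _ = ⨆ w, edist (f^[i] w) (f^[k] w) := by
        simp only [← Function.iterate_add_apply, Nat.sub_add_cancel hlt.le]

end Scrambled

theorem neBot_atTop_inf_principal_iff {M : Set ℕ} : (atTop ⊓ 𝓟 M).NeBot ↔ M.Infinite :=
  frequently_mem_iff_neBot.symm.trans Nat.frequently_atTop_iff_infinite

theorem image_iUnion_image_iterate_subset {X : Type*} (f : X → X) (S : Set X) :
    f '' ⋃ i : ℕ, f^[i] '' S ⊆ ⋃ i : ℕ, f^[i] '' S := by
  rw [Set.image_iUnion]
  refine Set.iUnion_subset fun i => Set.subset_iUnion_of_subset (i + 1) ?_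
  rw [Function.iterate_succ', Set.image_comp]

theorem mixing_invariant_delta_scrambled_wrt_M_general {X : Type*} [MetricSpace X] [PolishSpace X]
    [Nontrivial X] (f : X → X) (hf : Continuous f) (hmix : TopMixing f)
    (hfix : ∃ z : X, f z = z)
    (δ : ℝ≥0∞) (hδ : δ = ⨅ (n : ℕ) (_ : 1 ≤ n), ⨆ x : X, edist (f^[n] x) x)
    (M : Set ℕ) (hM : M.Infinite) :
    ∃ S : ℕ → Set X,
      (∀ i j, i ≠ j → Disjoint (S i) (S j)) ∧
      (∀ j, IsCantorSet (S j)) ∧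
      (∀ j, ∀ a ∈ S j, TotallyTransitivePoint f a) ∧
      Dense (⋃ j, S j) ∧
      Dense (⋃ i : ℕ, f^[i] '' (⋃ j, S j)) ∧
      f '' (⋃ i : ℕ, f^[i] '' (⋃ j, S j)) ⊆ ⋃ i : ℕ, f^[i] '' (⋃ j, S j) ∧
      (∀ c ∈ ⋃ i : ℕ, f^[i] '' (⋃ j, S j), ∀ d ∈ ⋃ i : ℕ, f^[i] '' (⋃ j, S j), c ≠ d →
        Filter.liminf (fun n : ℕ => edist (f^[n] c) (f^[n] d)) (atTop ⊓ 𝓟 M) = 0 ∧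
        δ ≤ Filter.limsup (fun n : ℕ => edist (f^[n] c) (f^[n] d)) (atTop ⊓ 𝓟 M)) := by
  obtain ⟨z, hz⟩ := hfix
  have hδ_le : ∀ l, 1 ≤ l → δ ≤ ⨆ x, edist (f^[l] x) x := fun l hl => hδ.trans_le (iInf₂_le l hl)
  have hδ_diam : δ ≤ ⨆ q : X × X, edist q.1 q.2 := (hδ_le 1 le_rfl).trans <|
    iSup_le fun x => le_iSup (fun q : X × X => edist q.1 q.2) (f x, x)
  have := neBot_atTop_inf_principal_iff.2 hM
  have hpoint := (hmix.eventually_residual_isTransitiveAlong hf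
    (inf_le_left : atTop ⊓ 𝓟 M ≤ atTop)).and (hmix.eventually_residual_totallyTransitivePoint hf)
  have hpair := (hmix.prodMap hmix).eventually_residual_isTransitiveAlong (hf.prodMap hf)
    (inf_le_left : atTop ⊓ 𝓟 M ≤ atTop)
  obtain ⟨S, hdisj, hcantor, hgen, hdense, hS⟩ :=
    exists_cantorSets_of_mem_residual hpoint hpair fun x hx => hx.fst_ne_snd rfl
  have hsub : ⋃ j, S j ⊆ ⋃ i : ℕ, f^[i] '' (⋃ j, S j) :=
    Set.subset_iUnion_of_subset 0 (Set.image_id _).ge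
  refine ⟨S, fun i j => @hdisj i j, hcantor, fun j a ha => (hgen j ha).2, hdense,
    hdense.mono hsub, image_iUnion_image_iterate_subset f _, ?_⟩
  simp only [Set.mem_iUnion (s := fun i : ℕ => f^[i] '' _)]
  rintro _ ⟨i, x, hx, rfl⟩ _ ⟨k, y, hy, rfl⟩ hne
  by_cases hxy : x = y
  · subst hxy
    obtain ⟨j, hj⟩ := Set.mem_iUnion.1 hx
    exact (hgen j hj).1.isScrambledPair_iterate_self hf hz hmix.denseRange_iterate hδ_le
      fun hik => hne (hik ▸ rfl)
  · exact (hS hx hy hxy).isScrambledPair_iterate_iterate hf hz hmix.denseRange_iterate hδ_diam i k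

theorem mixing_invariant_delta_scrambled_wrt_M {X : Type*} [MetricSpace X] [Infinite X]
    [TopologicalSpace.SeparableSpace X] [LocallyCompactSpace X]
    (hiso : ∀ x : X, ¬ IsOpen ({x} : Set X))
    (f : X → X) (hf : Continuous f) (hmix : TopMixing f)
    (hfix : ∃ z : X, f z = z)
    (δ : ℝ≥0∞) (hδ : δ = ⨅ (n : ℕ) (_ : 1 ≤ n), ⨆ x : X, edist (f^[n] x) x)
    (M : Set ℕ) (hM : M.Infinite) (hM1 : ∀ m ∈ M, 1 ≤ m) :
    ∃ S : ℕ → Set X,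
      (∀ i j, i ≠ j → Disjoint (S i) (S j)) ∧
      (∀ j, IsCantorSet (S j)) ∧
      (∀ j, ∀ a ∈ S j, TotallyTransitivePoint f a) ∧
      Dense (⋃ j, S j) ∧
      Dense (⋃ i : ℕ, f^[i] '' (⋃ j, S j)) ∧
      f '' (⋃ i : ℕ, f^[i] '' (⋃ j, S j)) ⊆ ⋃ i : ℕ, f^[i] '' (⋃ j, S j) ∧
      (∀ c ∈ ⋃ i : ℕ, f^[i] '' (⋃ j, S j), ∀ d ∈ ⋃ i : ℕ, f^[i] '' (⋃ j, S j), c ≠ d →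
        Filter.liminf (fun n : ℕ => edist (f^[n] c) (f^[n] d)) (atTop ⊓ 𝓟 M) = 0 ∧
        δ ≤ Filter.limsup (fun n : ℕ => edist (f^[n] c) (f^[n] d)) (atTop ⊓ 𝓟 M)) := by
  have := UniformSpace.secondCountable_of_separable X
  have := polishSpace_of_locallyCompact (X := X)
  exact mixing_invariant_delta_scrambled_wrt_M_general f hf hmix hfix δ hδ M hM
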